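/- For each integer k with 1 ≤ k < p define d_k = λ_k − λ_{k+1}, ε_k = λ_{k+1} − λ_p, W_1^k = span{ξ_1, ..., ξ_k}, and decompose δ = δ_1^k + δ_2^k with δ_1^k ∈ W_1^k and δ_2^k ∈ span{ξ_{k+1}, ..., ξ_p}; set d̃_k = d_k·ρ||δ_2^k||_2^2/(d_k + ρ||δ||_2^2), and define C_k = √(k+1) + √(p−k−1)·((λ_p + ε_k)/λ_p)·( ε_k/λ_p + √( ε_k/(d̃_k − 2ε_k) ) ) if d̃_k − 2ε_k > 0, and C_k = ∞ otherwise. Suppose δ ≠ 0, let K be the least positive integer with δ ∈ W_1^K, and assume λ_K > λ_{K+1} whenever K < p. Then ||U^T β||_1 / ||U^T β||_2 ≤ min{C, √K}, where C = min_{1 ≤ k < K} C_k (with C = ∞ when K = 1). (Corollary 2) -/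

import Mathlib

open Matrix

/-!
With `A = T + ρ δ δᵀ` and `T β = δ`, the `ℓ¹` norm of `β` in the ordered eigenbasis `u` of `A` is
split into a head and a tail, and the head is bounded by Cauchy–Schwarz.

If `δ ∈ W₁ᴷ`, min-max bounds the eigenvalues of `A` of index beyond `K` by `λ_K`, which no
eigenvalue of `T` on `W₁ᴷ` falls below. The coordinates of the eigenvector equation then force such
eigenvectors to be orthogonal to `δ`, so they are eigenvectors of `T` and orthogonal to `β`: the
tail vanishes.

For `W = W₁ᵏ`, min-max on the orthogonal complement of `W + ℝ δ` bounds the eigenvalues of `A` of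
index beyond `k + 1` by `λ_{k+1} = λ_p + ε`. Hence every `x` in the span of the tail satisfies
`d ‖P_W x‖² + ρ ⟪δ, x⟫² ≤ ε ‖x‖²`. The left side is coercive on `W + ℝ δ`, so the component of `x`
there is small, while the remaining component is orthogonal to `δ` and `W`, so that it pairs with
`β` only through `P_{Wᗮ} (δ - λ_p β)`, of norm at most `ε ‖β‖`. Taking `x` to be the projection of
`β` onto the span of the tail bounds `‖x‖`.
-/

open Finset Module
open scoped InnerProductSpace

section EffectiveGap

variable {E : Type*} [NormedAddCommGroup E] [InnerProductSpace ℝ E]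
  {W : Submodule ℝ E} [W.HasOrthogonalProjection] {d ρ m ε : ℝ} {δ β x v : E}

variable (W d ρ δ) in
/-- The paper's `d̃ = d ρ ‖δ₂‖² / (d + ρ ‖δ‖²)`, where `δ₂` is the component of `δ` orthogonal
to `W`: the coercivity constant of the form `d ‖P_W v‖² + ρ ⟪δ, v⟫²` on `W + ℝ δ`. -/
noncomputable def effectiveGap : ℝ :=
  d * ρ * ‖Wᗮ.starProjection δ‖ ^ 2 / (d + ρ * ‖δ‖ ^ 2)

theorem exists_eq_starProjection_add_smul (hv : v ∈ W ⊔ ℝ ∙ δ) :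
    ∃ r : ℝ, v = W.starProjection v + r • Wᗮ.starProjection δ := by
  obtain ⟨w, hw, z, hz, rfl⟩ := Submodule.mem_sup.1 hv
  obtain ⟨r, rfl⟩ := Submodule.mem_span_singleton.1 hz
  refine ⟨r, ?_⟩
  rw [map_add, map_smul, Submodule.starProjection_eq_self_iff.2 hw, add_assoc, ← smul_add,
    W.starProjection_add_starProjection_orthogonal]

theorem mul_norm_sq_le_of_mem_sup_span (hd : 0 ≤ d) (hρ : 0 ≤ ρ) (hv : v ∈ W ⊔ ℝ ∙ δ) :
    d * ρ * ‖Wᗮ.starProjection δ‖ ^ 2 * ‖v‖ ^ 2 ≤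
      (d + ρ * ‖δ‖ ^ 2) * (d * ‖W.starProjection v‖ ^ 2 + ρ * ⟪δ, v⟫_ℝ ^ 2) := by
  obtain ⟨r, hr⟩ := exists_eq_starProjection_add_smul hv
  set δ₁ := W.starProjection δ
  set δ₂ := Wᗮ.starProjection δ
  set y := W.starProjection v
  have hδ : δ₁ + δ₂ = δ := W.starProjection_add_starProjection_orthogonal δ
  have orth {w : E} (hw : w ∈ W) : ⟪w, δ₂⟫_ℝ = 0 :=
    W.inner_right_of_mem_orthogonal hw (Wᗮ.starProjection_apply_mem δ)
  have hyδ : ⟪y, δ₂⟫_ℝ = 0 := orth (W.starProjection_apply_mem v)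
  have hδδ : ⟪δ₁, δ₂⟫_ℝ = 0 := orth (W.starProjection_apply_mem δ)
  have norm_v : ‖v‖ ^ 2 = ‖y‖ ^ 2 + r ^ 2 * ‖δ₂‖ ^ 2 := by
    rw [hr, norm_add_sq_real, inner_smul_right, hyδ, norm_smul, Real.norm_eq_abs, mul_pow, sq_abs]
    ring
  have norm_δ : ‖δ‖ ^ 2 = ‖δ₁‖ ^ 2 + ‖δ₂‖ ^ 2 := by
    rw [← hδ, norm_add_sq_real, hδδ]
    ring
  have inner_δv : ⟪δ, v⟫_ℝ = ⟪δ₁, y⟫_ℝ + r * ‖δ₂‖ ^ 2 := by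
    rw [← hδ, hr, inner_add_left, inner_add_right, inner_add_right, inner_smul_right,
      inner_smul_right, hδδ, real_inner_comm y δ₂, hyδ, real_inner_self_eq_norm_sq]
    ring
  have cauchy : ⟪δ₁, y⟫_ℝ ^ 2 ≤ ‖δ₁‖ ^ 2 * ‖y‖ ^ 2 := by
    simpa only [sq_abs, mul_pow] using
      pow_le_pow_left₀ (abs_nonneg _) (abs_real_inner_le_norm δ₁ y) 2
  -- The difference of the two sides is this square plus `dρ` times the Cauchy–Schwarz defect
  -- plus `ρ² ‖δ₂‖² ⟪δ, v⟫²`.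
  have square : 0 ≤ d ^ 2 * ‖y‖ ^ 2 + 2 * (d * ρ * ⟪δ, v⟫_ℝ * ⟪δ₁, y⟫_ℝ)
      + ρ ^ 2 * ⟪δ, v⟫_ℝ ^ 2 * ‖δ₁‖ ^ 2 := by
    have := sq_nonneg ‖d • y + (ρ * ⟪δ, v⟫_ℝ) • δ₁‖
    rw [norm_add_sq_real, inner_smul_left, inner_smul_right, norm_smul, norm_smul,
      real_inner_comm δ₁ y, mul_pow, mul_pow, Real.norm_eq_abs, Real.norm_eq_abs, sq_abs,
      sq_abs, RCLike.conj_to_real] at this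
    linarith
  have defect := mul_nonneg (mul_nonneg hd hρ) (sub_nonneg.2 cauchy)
  have rest : 0 ≤ ρ ^ 2 * ‖δ₂‖ ^ 2 * ⟪δ, v⟫_ℝ ^ 2 := by positivity
  rw [norm_v, norm_δ]
  rw [inner_δv] at square rest ⊢
  linarith

theorem effectiveGap_mul_norm_sq_le (hd : 0 ≤ d) (hρ : 0 ≤ ρ) (hv : v ∈ W ⊔ ℝ ∙ δ) :
    effectiveGap W d ρ δ * ‖v‖ ^ 2 ≤ d * ‖W.starProjection v‖ ^ 2 + ρ * ⟪δ, v⟫_ℝ ^ 2 := by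
  rw [effectiveGap, div_mul_eq_mul_div]
  refine div_le_of_le_mul₀ (by positivity) (by positivity) ?_
  rw [mul_comm _ (d + _)]
  exact mul_norm_sq_le_of_mem_sup_span hd hρ hv

theorem mul_inner_le_of_mem_orthogonal_sup_span {q : E} (hq : q ∈ (W ⊔ ℝ ∙ δ)ᗮ)
    (hβ : ‖Wᗮ.starProjection (δ - m • β)‖ ≤ ε * ‖β‖) :
    m * ⟪q, β⟫_ℝ ≤ ε * ‖q‖ * ‖β‖ := by
  rw [← Submodule.inf_orthogonal, Submodule.mem_inf,
    Submodule.mem_orthogonal_singleton_iff_inner_left] at hq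
  have key : m * ⟪q, β⟫_ℝ = -⟪q, Wᗮ.starProjection (δ - m • β)⟫_ℝ := by
    rw [← Submodule.inner_starProjection_left_eq_right,
      Submodule.starProjection_eq_self_iff.2 hq.1, inner_sub_right, inner_smul_right, hq.2]
    ring
  calc m * ⟪q, β⟫_ℝ ≤ ‖q‖ * ‖Wᗮ.starProjection (δ - m • β)‖ := by
        rw [key]
        exact (neg_le_abs _).trans (abs_real_inner_le_norm _ _)
    _ ≤ ‖q‖ * (ε * ‖β‖) := by gcongr
    _ = ε * ‖q‖ * ‖β‖ := by ring

theorem inner_le_of_effectiveGap_pos [(W ⊔ ℝ ∙ δ).HasOrthogonalProjection] (hm : 0 < m)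
    (hd : 0 ≤ d) (hρ : 0 ≤ ρ) (hgap : 0 < effectiveGap W d ρ δ) (hε : 0 ≤ ε)
    (hβ : ‖Wᗮ.starProjection (δ - m • β)‖ ≤ ε * ‖β‖)
    (hx : d * ‖W.starProjection x‖ ^ 2 + ρ * ⟪δ, x⟫_ℝ ^ 2 ≤ ε * ‖x‖ ^ 2) :
    ⟪x, β⟫_ℝ ≤ (ε / m + √(ε / effectiveGap W d ρ δ)) * ‖x‖ * ‖β‖ := by
  set V := W ⊔ ℝ ∙ δ
  set v := V.starProjection x
  set q := Vᗮ.starProjection x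
  have hWv : W.starProjection v = W.starProjection x :=
    DFunLike.congr_fun (Submodule.starProjection_comp_starProjection_of_le le_sup_left) x
  have hδv : ⟪δ, v⟫_ℝ = ⟪δ, x⟫_ℝ := by
    rw [← Submodule.inner_starProjection_left_eq_right, Submodule.starProjection_eq_self_iff.2
      (Submodule.mem_sup_right (Submodule.mem_span_singleton_self δ))]
  have hv : ‖v‖ ≤ √(ε / effectiveGap W d ρ δ) * ‖x‖ := by
    have := effectiveGap_mul_norm_sq_le hd hρ (V.starProjection_apply_mem x)
    rw [hWv, hδv] at this
    rw [← Real.sqrt_sq (norm_nonneg x), ← Real.sqrt_mul (by positivity)]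
    apply Real.le_sqrt_of_sq_le
    rw [div_mul_eq_mul_div, le_div_iff₀' hgap]
    exact this.trans hx
  have hq : ⟪q, β⟫_ℝ ≤ ε / m * ‖x‖ * ‖β‖ := by
    rw [div_mul_eq_mul_div, div_mul_eq_mul_div, le_div_iff₀' hm]
    refine (mul_inner_le_of_mem_orthogonal_sup_span (Vᗮ.starProjection_apply_mem x) hβ).trans ?_
    gcongr
    exact Vᗮ.norm_starProjection_apply_le x
  calc ⟪x, β⟫_ℝ = ⟪v, β⟫_ℝ + ⟪q, β⟫_ℝ := by
        rw [← inner_add_left, V.starProjection_add_starProjection_orthogonal]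
    _ ≤ √(ε / effectiveGap W d ρ δ) * ‖x‖ * ‖β‖ + ε / m * ‖x‖ * ‖β‖ := by
        gcongr
        exact (real_inner_le_norm v β).trans (by gcongr)
    _ = _ := by ring

end EffectiveGap

section SpanOn

variable {E ι : Type*} [NormedAddCommGroup E] [InnerProductSpace ℝ E]
  {v : ι → E} {s : Finset ι} {x : E}

/-- The span of the vectors `v i` with `i ∈ s`. For an ordered eigenbasis and `s` the first `k`
indices this is the paper's `W₁ᵏ`. -/
abbrev spanOn (v : ι → E) (s : Finset ι) : Submodule ℝ E :=
  Submodule.span ℝ (v '' s)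

instance : FiniteDimensional ℝ (spanOn v s) :=
  FiniteDimensional.span_of_finite ℝ (s.finite_toSet.image v)

theorem finrank_spanOn_le : finrank ℝ (spanOn v s) ≤ #s := by
  classical
  rw [spanOn, ← coe_image]
  exact (finrank_span_finset_le_card _).trans card_image_le

theorem mem_orthogonal_spanOn_iff : x ∈ (spanOn v s)ᗮ ↔ ∀ i ∈ s, ⟪v i, x⟫_ℝ = 0 := by
  rw [← Submodule.span_singleton_le_iff_mem, ← Submodule.isOrtho_iff_le, Submodule.isOrtho_comm,
    Submodule.isOrtho_span]
  simp

theorem inner_eq_zero_of_mem_spanOn (hv : Orthonormal ℝ v) (hx : x ∈ spanOn v s) {i : ι}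
    (hi : i ∉ s) : ⟪v i, x⟫_ℝ = 0 := by
  rw [real_inner_comm]
  refine mem_orthogonal_spanOn_iff.2 (fun j hj => ?_) x hx
  exact hv.inner_eq_zero fun h => hi (h ▸ hj)

theorem starProjection_spanOn (hv : Orthonormal ℝ v) (s : Finset ι) (x : E) :
    (spanOn v s).starProjection x = ∑ i ∈ s, ⟪v i, x⟫_ℝ • v i := by
  refine Submodule.eq_starProjection_of_mem_orthogonal ?_ ?_
  · exact Submodule.sum_mem _ fun i hi =>
      Submodule.smul_mem _ _ (Submodule.subset_span ⟨i, hi, rfl⟩)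
  · refine mem_orthogonal_spanOn_iff.2 fun i hi => ?_
    rw [inner_sub_right, hv.inner_right_sum _ hi, sub_self]

theorem norm_sq_starProjection_spanOn (hv : Orthonormal ℝ v) (s : Finset ι) (x : E) :
    ‖(spanOn v s).starProjection x‖ ^ 2 = ∑ i ∈ s, ⟪v i, x⟫_ℝ ^ 2 := by
  rw [starProjection_spanOn hv, ← real_inner_self_eq_norm_sq, hv.inner_sum]
  simp [sq]

theorem sum_abs_inner_le (hv : Orthonormal ℝ v) (s : Finset ι) (x : E) :
    ∑ i ∈ s, |⟪v i, x⟫_ℝ| ≤ √(#s) * ‖(spanOn v s).starProjection x‖ := by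
  rw [← Real.sqrt_sq (norm_nonneg (Submodule.starProjection _ _)), ← Real.sqrt_mul (by positivity),
    norm_sq_starProjection_spanOn hv]
  apply Real.le_sqrt_of_sq_le
  simpa only [sq_abs] using sq_sum_le_card_mul_sum_sq (s := s) (f := fun i => |⟪v i, x⟫_ℝ|)

theorem sum_abs_inner_le_norm (hv : Orthonormal ℝ v) (s : Finset ι) (x : E) :
    ∑ i ∈ s, |⟪v i, x⟫_ℝ| ≤ √(#s) * ‖x‖ :=
  (sum_abs_inner_le hv s x).trans (by gcongr; exact Submodule.norm_starProjection_apply_le _ x)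

theorem starProjection_orthogonal_spanOn [Fintype ι] [DecidableEq ι] (b : OrthonormalBasis ι ℝ E)
    (s : Finset ι) : (spanOn b s)ᗮ.starProjection = (spanOn b sᶜ).starProjection := by
  ext x
  rw [Submodule.starProjection_orthogonal_val, starProjection_spanOn b.orthonormal,
    starProjection_spanOn b.orthonormal, sub_eq_iff_eq_add, sum_compl_add_sum, b.sum_repr']

end SpanOn

section Eigenbasis

variable {E ι : Type*} [Fintype ι] [NormedAddCommGroup E] [InnerProductSpace ℝ E]
  {b : OrthonormalBasis ι ℝ E} {T : E →ₗ[ℝ] E} {lam : ι → ℝ} {L : ℝ} {x : E}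

theorem inner_map_of_eigenbasis (hT : ∀ j, T (b j) = lam j • b j) (x : E) (j : ι) :
    ⟪b j, T x⟫_ℝ = lam j * ⟪b j, x⟫_ℝ := by
  classical
  conv_lhs => rw [← b.sum_repr' x]
  simp [hT, inner_sum, inner_smul_right, b.inner_eq_ite, mul_comm]

theorem isSymmetric_of_eigenbasis (hT : ∀ j, T (b j) = lam j • b j) : T.IsSymmetric := by
  intro x y
  rw [← b.sum_inner_mul_inner, ← b.sum_inner_mul_inner]
  refine sum_congr rfl fun j _ => ?_
  rw [inner_map_of_eigenbasis hT, real_inner_comm, inner_map_of_eigenbasis hT, real_inner_comm x]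
  ring

theorem injective_of_eigenbasis (hT : ∀ j, T (b j) = lam j • b j) (hlam : ∀ j, lam j ≠ 0) :
    Function.Injective T := by
  rw [← LinearMap.ker_eq_bot, LinearMap.ker_eq_bot']
  intro x hx
  refine InnerProductSpace.ext_inner_left_basis b.toBasis fun j => ?_
  have := inner_map_of_eigenbasis hT x j
  simpa [hx, hlam j] using this

theorem inner_map_self_eq_sum (hT : ∀ j, T (b j) = lam j • b j) (x : E) :
    ⟪x, T x⟫_ℝ = ∑ j, lam j * ⟪b j, x⟫_ℝ ^ 2 := by
  rw [← b.sum_inner_mul_inner]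
  refine sum_congr rfl fun j _ => ?_
  rw [inner_map_of_eigenbasis hT, real_inner_comm]
  ring

theorem inner_map_self_le (hT : ∀ j, T (b j) = lam j • b j)
    (hx : ∀ j, ⟪b j, x⟫_ℝ ≠ 0 → lam j ≤ L) : ⟪x, T x⟫_ℝ ≤ L * ‖x‖ ^ 2 := by
  rw [inner_map_self_eq_sum hT, ← b.sum_sq_inner_right, mul_sum]
  refine sum_le_sum fun j _ => ?_
  by_cases h : ⟪b j, x⟫_ℝ = 0
  · simp [h]
  · exact mul_le_mul_of_nonneg_right (hx j h) (sq_nonneg _)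

theorem le_inner_map_self (hT : ∀ j, T (b j) = lam j • b j)
    (hx : ∀ j, ⟪b j, x⟫_ℝ ≠ 0 → L ≤ lam j) : L * ‖x‖ ^ 2 ≤ ⟪x, T x⟫_ℝ := by
  have hneg (j : ι) : (-T) (b j) = (-lam j) • b j := by simp [hT]
  simpa using inner_map_self_le hneg fun j hj => neg_le_neg (hx j hj)

theorem add_norm_sq_starProjection_le_inner_map_self {s : Finset ι} {m d : ℝ}
    (hT : ∀ j, T (b j) = lam j • b j) (hs : ∀ j ∈ s, m + d ≤ lam j) (hm : ∀ j ∉ s, m ≤ lam j)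
    (x : E) : m * ‖x‖ ^ 2 + d * ‖(spanOn b s).starProjection x‖ ^ 2 ≤ ⟪x, T x⟫_ℝ := by
  classical
  rw [inner_map_self_eq_sum hT, ← b.sum_sq_inner_right,
    norm_sq_starProjection_spanOn b.orthonormal, mul_sum, mul_sum, ← sum_add_sum_compl s,
    ← sum_add_sum_compl s (fun j => lam j * _), add_right_comm, ← sum_add_distrib]
  gcongr with j hj j hj
  · nlinarith [hs j hj, sq_nonneg ⟪b j, x⟫_ℝ]
  · exact hm j (mem_compl.1 hj)

theorem norm_starProjection_orthogonal_map_sub_le {s : Finset ι} {m ε : ℝ}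
    (hT : ∀ j, T (b j) = lam j • b j) (hs : ∀ j ∉ s, |lam j - m| ≤ ε) (hε : 0 ≤ ε) (x : E) :
    ‖(spanOn b s)ᗮ.starProjection (T x - m • x)‖ ≤ ε * ‖x‖ := by
  classical
  refine le_of_sq_le_sq ?_ (by positivity)
  rw [starProjection_orthogonal_spanOn, norm_sq_starProjection_spanOn b.orthonormal, mul_pow,
    ← b.sum_sq_inner_right, mul_sum]
  calc ∑ j ∈ sᶜ, ⟪b j, T x - m • x⟫_ℝ ^ 2
      = ∑ j ∈ sᶜ, |lam j - m| ^ 2 * ⟪b j, x⟫_ℝ ^ 2 := by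
        refine sum_congr rfl fun j _ => ?_
        rw [inner_sub_right, inner_map_of_eigenbasis hT, inner_smul_right, sq_abs]
        ring
    _ ≤ ∑ j ∈ sᶜ, ε ^ 2 * ⟪b j, x⟫_ℝ ^ 2 := by
        gcongr with j hj
        exact hs j (mem_compl.1 hj)
    _ ≤ ∑ j, ε ^ 2 * ⟪b j, x⟫_ℝ ^ 2 :=
        sum_le_univ_sum_of_nonneg fun j => by positivity

end Eigenbasis

section MinMax

variable {E : Type*} [NormedAddCommGroup E] [InnerProductSpace ℝ E] {p : ℕ}
  {u : OrthonormalBasis (Fin p) ℝ E} {A : E →ₗ[ℝ] E} {η : Fin p → ℝ}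

theorem eigenvalue_le_of_finrank_le (hA : ∀ i, A (u i) = η i • u i) (hη : Antitone η)
    {F : Submodule ℝ E} {i : Fin p} {L : ℝ} (hF : finrank ℝ F ≤ i)
    (hL : ∀ x ∈ Fᗮ, ⟪x, A x⟫_ℝ ≤ L * ‖x‖ ^ 2) : η i ≤ L := by
  have : FiniteDimensional ℝ E := u.toBasis.finiteDimensional_of_finite
  obtain ⟨x, hx, hx0⟩ : ∃ x ∈ Fᗮ ⊓ (spanOn u (Ioi i))ᗮ, x ≠ 0 := by
    rw [Submodule.inf_orthogonal, ← Submodule.ne_bot_iff, ne_eq, Submodule.orthogonal_eq_bot_iff]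
    intro htop
    have h₁ := Submodule.finrank_add_le_finrank_add_finrank F (spanOn u (Ioi i))
    have h₂ := finrank_spanOn_le (v := u) (s := Ioi i)
    rw [htop, finrank_top, finrank_eq_card_basis u.toBasis, Fintype.card_fin] at h₁
    rw [Fin.card_Ioi] at h₂
    omega
  refine le_of_mul_le_mul_right ?_ (by positivity : 0 < ‖x‖ ^ 2)
  refine (le_inner_map_self hA fun j hj => hη ?_).trans (hL x hx.1)
  by_contra! hij
  exact hj (mem_orthogonal_spanOn_iff.1 hx.2 j (mem_Ioi.2 hij))

end MinMax

section RankOneUpdate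

variable {E ι : Type*} [NormedAddCommGroup E] [InnerProductSpace ℝ E]

/-- The operator `T + ρ δ δᵀ`, the paper's `Σ^tot` when `T` is `Σ`. -/
noncomputable def rankOneUpdate (T : E →ₗ[ℝ] E) (ρ : ℝ) (δ : E) : E →ₗ[ℝ] E :=
  T + ρ • (InnerProductSpace.rankOne ℝ δ δ).toLinearMap

theorem rankOneUpdate_apply (T : E →ₗ[ℝ] E) (ρ : ℝ) (δ x : E) :
    rankOneUpdate T ρ δ x = T x + (ρ * ⟪δ, x⟫_ℝ) • δ := by
  simp [rankOneUpdate, mul_smul]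

theorem inner_rankOneUpdate_self (T : E →ₗ[ℝ] E) (ρ : ℝ) (δ x : E) :
    ⟪x, rankOneUpdate T ρ δ x⟫_ℝ = ⟪x, T x⟫_ℝ + ρ * ⟪δ, x⟫_ℝ ^ 2 := by
  rw [rankOneUpdate_apply, inner_add_right, inner_smul_right, real_inner_comm δ x]
  ring

variable {p : ℕ} [Fintype ι] {b : OrthonormalBasis ι ℝ E} {u : OrthonormalBasis (Fin p) ℝ E}
  {T : E →ₗ[ℝ] E} {lam : ι → ℝ} {η : Fin p → ℝ} {δ β : E} {ρ L m d ε : ℝ} {s : Finset ι}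

theorem eigenvalue_rankOneUpdate_le (hT : ∀ j, T (b j) = lam j • b j)
    (hA : ∀ i, rankOneUpdate T ρ δ (u i) = η i • u i) (hη : Antitone η)
    (hs : ∀ j ∉ s, lam j ≤ L) {i : Fin p} (hi : finrank ℝ ↥(spanOn b s ⊔ ℝ ∙ δ) ≤ i) :
    η i ≤ L := by
  refine eigenvalue_le_of_finrank_le hA hη hi fun x hx => ?_
  rw [← Submodule.inf_orthogonal, Submodule.mem_inf,
    Submodule.mem_orthogonal_singleton_iff_inner_right] at hx
  rw [inner_rankOneUpdate_self, hx.2, zero_pow two_ne_zero, mul_zero, add_zero]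
  exact inner_map_self_le hT fun j hj => hs j fun hjs =>
    hj (mem_orthogonal_spanOn_iff.1 hx.1 j hjs)

theorem inner_eq_zero_of_rankOneUpdate_eigenvector (hT : ∀ j, T (b j) = lam j • b j) (hρ : 0 < ρ)
    (hδ : δ ∈ spanOn b s) {w : E} {μ : ℝ} (hw : rankOneUpdate T ρ δ w = μ • w)
    (hμ : ∀ j ∈ s, μ ≤ lam j) : ⟪δ, w⟫_ℝ = 0 := by
  have coord (j : ι) : ρ * ⟪δ, w⟫_ℝ * ⟪b j, δ⟫_ℝ = (μ - lam j) * ⟪b j, w⟫_ℝ := by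
    have := congr_arg (⟪b j, ·⟫_ℝ) hw
    simp only [rankOneUpdate_apply, inner_add_right, inner_smul_right,
      inner_map_of_eigenbasis hT] at this
    linarith
  have term_nonpos (j : ι) : ρ * ⟪δ, w⟫_ℝ * (⟪δ, b j⟫_ℝ * ⟪b j, w⟫_ℝ) ≤ 0 := by
    by_cases hj : j ∈ s
    · rw [real_inner_comm (b j) δ, ← mul_assoc, coord, mul_assoc]
      exact mul_nonpos_of_nonpos_of_nonneg (sub_nonpos.2 (hμ j hj)) (mul_self_nonneg _)
    · rw [real_inner_comm (b j) δ, inner_eq_zero_of_mem_spanOn b.orthonormal hδ hj, zero_mul,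
        mul_zero]
  have : ρ * ⟪δ, w⟫_ℝ ^ 2 ≤ 0 := by
    rw [sq, ← mul_assoc]
    nth_rw 2 [← b.sum_inner_mul_inner]
    rw [mul_sum]
    exact sum_nonpos fun j _ => term_nonpos j
  exact (pow_eq_zero_iff two_ne_zero).1
    (le_antisymm (nonpos_of_mul_nonpos_right this hρ) (sq_nonneg _))

theorem inner_preimage_eq_zero_of_inner_eq_zero (hsymm : T.IsSymmetric)
    (hinj : Function.Injective T) (hβ : T β = δ) {w : E} {μ : ℝ}
    (hw : rankOneUpdate T ρ δ w = μ • w) (hδw : ⟪δ, w⟫_ℝ = 0) : ⟪w, β⟫_ℝ = 0 := by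
  have hTw : T w = μ • w := by simpa [rankOneUpdate_apply, hδw] using hw
  rcases eq_or_ne μ 0 with rfl | hμ
  · have : w = 0 := hinj (by simpa using hTw)
    simp [this]
  · have : μ * ⟪w, β⟫_ℝ = 0 := by
      rw [← real_inner_smul_left, ← hTw, hsymm, hβ, real_inner_comm, hδw]
    exact (mul_eq_zero.1 this).resolve_left hμ

theorem sum_abs_inner_le_sqrt_card_mul_norm (hT : ∀ j, T (b j) = lam j • b j)
    (hlam : ∀ j, lam j ≠ 0) (hA : ∀ i, rankOneUpdate T ρ δ (u i) = η i • u i) (hη : Antitone η)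
    (hρ : 0 < ρ) (hβ : T β = δ) (hδ : δ ∈ spanOn b s) (hs : ∀ j ∈ s, L ≤ lam j)
    (hsc : ∀ j ∉ s, lam j ≤ L) : ∑ i, |⟪u i, β⟫_ℝ| ≤ √(#s) * ‖β‖ := by
  have hrank : finrank ℝ ↥(spanOn b s ⊔ ℝ ∙ δ) ≤ #s := by
    rw [sup_eq_left.2 (Submodule.span_singleton_le_iff_mem _ _ |>.2 hδ)]
    exact finrank_spanOn_le
  have tail_zero (i : Fin p) (hi : #s ≤ i) : ⟪u i, β⟫_ℝ = 0 := by
    have hηi : η i ≤ L := eigenvalue_rankOneUpdate_le hT hA hη hsc (hrank.trans hi)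
    exact inner_preimage_eq_zero_of_inner_eq_zero (isSymmetric_of_eigenbasis hT)
      (injective_of_eigenbasis hT hlam) hβ (hA i)
      (inner_eq_zero_of_rankOneUpdate_eigenvector hT hρ hδ (hA i) fun j hj => hηi.trans (hs j hj))
  calc ∑ i, |⟪u i, β⟫_ℝ| = ∑ i with i.val < #s, |⟪u i, β⟫_ℝ| := by
        refine (sum_filter_of_ne fun i _ hi => ?_).symm
        contrapose! hi
        rw [tail_zero i hi, abs_zero]
    _ ≤ √(#{i : Fin p | i.val < #s}) * ‖β‖ := sum_abs_inner_le_norm u.orthonormal _ β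
    _ ≤ √(#s) * ‖β‖ := by
        gcongr
        rw [Fin.card_filter_val_lt]
        exact min_le_right _ _

theorem norm_starProjection_le_of_effectiveGap_pos (hT : ∀ j, T (b j) = lam j • b j)
    (hA : ∀ i, rankOneUpdate T ρ δ (u i) = η i • u i) (hρ : 0 ≤ ρ) (hβ : T β = δ)
    (hm : 0 < m) (hd : 0 ≤ d) (hε : 0 ≤ ε) (hs : ∀ j ∈ s, m + d ≤ lam j)
    (hsc : ∀ j ∉ s, m ≤ lam j ∧ lam j ≤ m + ε) (hgap : 0 < effectiveGap (spanOn b s) d ρ δ)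
    {r : Finset (Fin p)} (hr : ∀ i ∈ r, η i ≤ m + ε) :
    ‖(spanOn u r).starProjection β‖ ≤
      (ε / m + √(ε / effectiveGap (spanOn b s) d ρ δ)) * ‖β‖ := by
  set x := (spanOn u r).starProjection β with hx
  have upper : ⟪x, rankOneUpdate T ρ δ x⟫_ℝ ≤ (m + ε) * ‖x‖ ^ 2 :=
    inner_map_self_le hA fun i hi => hr i <| by
      contrapose! hi
      exact inner_eq_zero_of_mem_spanOn u.orthonormal (Submodule.starProjection_apply_mem _ _) hi
  have lower := add_norm_sq_starProjection_le_inner_map_self hT hs (fun j hj => (hsc j hj).1) x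
  have residual : ‖(spanOn b s)ᗮ.starProjection (δ - m • β)‖ ≤ ε * ‖β‖ := by
    rw [← hβ]
    refine norm_starProjection_orthogonal_map_sub_le hT (fun j hj => ?_) hε β
    rw [abs_le]
    constructor <;> linarith [hsc j hj]
  have pairing := inner_le_of_effectiveGap_pos (x := x) hm hd hρ hgap hε residual (by
    rw [inner_rankOneUpdate_self] at upper
    linarith)
  have self : ⟪x, β⟫_ℝ = ‖x‖ * ‖x‖ := by
    rw [← real_inner_self_eq_norm_mul_norm, hx, Submodule.inner_starProjection_left_eq_right,
      Submodule.inner_starProjection_left_eq_right,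
      Submodule.starProjection_eq_self_iff.2 (Submodule.starProjection_apply_mem _ _)]
  rcases (norm_nonneg x).eq_or_lt with hx0 | hx0
  · rw [← hx0]
    positivity
  · refine le_of_mul_le_mul_right ?_ hx0
    rw [← self, mul_right_comm]
    exact pairing

theorem sum_abs_inner_le_of_effectiveGap_pos (hT : ∀ j, T (b j) = lam j • b j)
    (hA : ∀ i, rankOneUpdate T ρ δ (u i) = η i • u i) (hη : Antitone η) (hρ : 0 ≤ ρ)
    (hβ : T β = δ) (hm : 0 < m) (hd : 0 ≤ d) (hε : 0 ≤ ε) (hs : ∀ j ∈ s, m + d ≤ lam j)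
    (hsc : ∀ j ∉ s, m ≤ lam j ∧ lam j ≤ m + ε) (hgap : 0 < effectiveGap (spanOn b s) d ρ δ) :
    ∑ i, |⟪u i, β⟫_ℝ| ≤ (√(#s + 1) +
      √(p - #s - 1 : ℕ) * (ε / m + √(ε / effectiveGap (spanOn b s) d ρ δ))) * ‖β‖ := by
  set head : Finset (Fin p) := {i | i.val < #s + 1} with hhead
  have hrank : finrank ℝ ↥(spanOn b s ⊔ ℝ ∙ δ) ≤ #s + 1 :=
    (Submodule.finrank_add_le_finrank_add_finrank _ _).trans
      (add_le_add finrank_spanOn_le ((finrank_span_le_card {δ}).trans (by simp)))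
  have tail_le (i : Fin p) (hi : i ∈ headᶜ) : η i ≤ m + ε :=
    eigenvalue_rankOneUpdate_le hT hA hη (fun j hj => (hsc j hj).2)
      (hrank.trans (by simpa [hhead] using hi))
  have card_head : #head ≤ #s + 1 := by
    rw [hhead, Fin.card_filter_val_lt]
    exact min_le_right _ _
  have card_tail : #headᶜ ≤ p - #s - 1 := by
    rw [card_compl, hhead, Fin.card_filter_val_lt, Fintype.card_fin]
    omega
  calc ∑ i, |⟪u i, β⟫_ℝ| = ∑ i ∈ head, |⟪u i, β⟫_ℝ| + ∑ i ∈ headᶜ, |⟪u i, β⟫_ℝ| :=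
        (sum_add_sum_compl _ _).symm
    _ ≤ √(#head) * ‖β‖ + √(#headᶜ) * ‖(spanOn u headᶜ).starProjection β‖ :=
        add_le_add (sum_abs_inner_le_norm u.orthonormal _ _) (sum_abs_inner_le u.orthonormal _ _)
    _ ≤ √(#s + 1) * ‖β‖ + √(p - #s - 1 : ℕ) *
          ((ε / m + √(ε / effectiveGap (spanOn b s) d ρ δ)) * ‖β‖) := by
        gcongr
        · exact_mod_cast card_head
        · exact norm_starProjection_le_of_effectiveGap_pos hT hA hρ hβ hm hd hε hs hsc hgap tail_le
    _ = _ := by ring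

theorem sum_abs_inner_le_sqrt_mul_norm_of_antitone {b : OrthonormalBasis (Fin p) ℝ E}
    {lam : Fin p → ℝ} (hT : ∀ j, T (b j) = lam j • b j) (hlam : ∀ j, lam j ≠ 0)
    (hdesc : Antitone lam) (hA : ∀ i, rankOneUpdate T ρ δ (u i) = η i • u i) (hη : Antitone η)
    (hρ : 0 < ρ) (hβ : T β = δ) {k : ℕ} (hk : 1 ≤ k) (hkp : k ≤ p)
    (hδ : δ ∈ spanOn b {j | j.val < k}) : ∑ i, |⟪u i, β⟫_ℝ| ≤ √k * ‖β‖ := by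
  simpa [Fin.card_filter_val_lt, hkp] using sum_abs_inner_le_sqrt_card_mul_norm
    (L := lam ⟨k - 1, Nat.sub_one_lt_of_le hk hkp⟩) hT hlam hA hη hρ hβ hδ
    (fun j hj => hdesc <| Fin.le_def.2 <| Nat.le_sub_one_of_lt (by simpa using hj))
    (fun j hj => hdesc <| Fin.le_def.2 <| (Nat.sub_le _ _).trans (by simpa using hj))

theorem sum_abs_inner_le_of_effectiveGap_pos_of_antitone {b : OrthonormalBasis (Fin p) ℝ E}
    {lam : Fin p → ℝ} (hT : ∀ j, T (b j) = lam j • b j) (hpos : ∀ j, 0 < lam j)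
    (hdesc : Antitone lam) (hA : ∀ i, rankOneUpdate T ρ δ (u i) = η i • u i) (hη : Antitone η)
    (hρ : 0 ≤ ρ) (hβ : T β = δ) {k : ℕ} (hkp : k < p)
    (hd : d = lam ⟨k - 1, (k.sub_le 1).trans_lt hkp⟩ - lam ⟨k, hkp⟩)
    (hε : ε = lam ⟨k, hkp⟩ - lam ⟨p - 1, Nat.sub_one_lt_of_lt hkp⟩)
    (hgap : 0 < effectiveGap (spanOn b {j | j.val < k}) d ρ δ) :
    ∑ i, |⟪u i, β⟫_ℝ| ≤ (√(k + 1) + √(p - k - 1 : ℕ) * (ε / lam ⟨p - 1, Nat.sub_one_lt_of_lt hkp⟩ +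
      √(ε / effectiveGap (spanOn b {j | j.val < k}) d ρ δ))) * ‖β‖ := by
  have hlast (j : Fin p) : lam ⟨p - 1, Nat.sub_one_lt_of_lt hkp⟩ ≤ lam j :=
    hdesc <| Fin.le_def.2 <| Nat.le_sub_one_of_lt j.isLt
  have head_le (j : Fin p) (hj : j.val < k) : lam ⟨k - 1, (k.sub_le 1).trans_lt hkp⟩ ≤ lam j :=
    hdesc <| Fin.le_def.2 <| Nat.le_sub_one_of_lt hj
  have tail_le (j : Fin p) (hj : k ≤ j.val) : lam j ≤ lam ⟨k, hkp⟩ := hdesc hj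
  simpa [Fin.card_filter_val_lt, hkp.le] using sum_abs_inner_le_of_effectiveGap_pos
    hT hA hη hρ hβ (hpos ⟨p - 1, Nat.sub_one_lt_of_lt hkp⟩)
    (hd ▸ sub_nonneg.2 (hdesc (Nat.sub_le k 1))) (hε ▸ sub_nonneg.2 (hlast _))
    (fun j hj => by linarith [hlast ⟨k, hkp⟩, head_le j (by simpa using hj)])
    (fun j hj => ⟨hlast j, by linarith [tail_le j (by simpa using hj)]⟩) hgap

end RankOneUpdate

section EuclideanCoordinates

variable {ι : Type*} [Fintype ι] {S U : Matrix ι ι ℝ} {v : ι → ι → ℝ} {x δ : ι → ℝ}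
  {η : ι → ℝ} {ρ c : ℝ} {b : OrthonormalBasis ι ℝ (EuclideanSpace ℝ ι)} {s : Finset ι}

theorem exists_orthonormalBasis_of_dotProduct [DecidableEq ι]
    (hv : ∀ i j, v i ⬝ᵥ v j = if i = j then 1 else 0) :
    ∃ b : OrthonormalBasis ι ℝ (EuclideanSpace ℝ ι), ∀ i, b i = WithLp.toLp 2 (v i) := by
  have hon : Orthonormal ℝ fun i => WithLp.toLp 2 (v i) := orthonormal_iff_ite.2 fun i j => by
    rw [EuclideanSpace.inner_toLp_toLp, star_trivial, dotProduct_comm, hv]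
  have hspan := hon.linearIndependent.span_eq_top_of_card_eq_finrank' (by simp)
  exact ⟨OrthonormalBasis.mk hon hspan.ge, fun i => by simp⟩

theorem mulVec_col_of_transpose_mul_mul_eq_diagonal [DecidableEq ι] (hU : Uᵀ * U = 1)
    (hdiag : Uᵀ * S * U = diagonal η) (i : ι) : S *ᵥ U.col i = η i • U.col i := by
  have hSU : S * U = U * diagonal η := by
    rw [← hdiag, Matrix.mul_assoc, ← Matrix.mul_assoc U, mul_eq_one_comm.1 hU, Matrix.one_mul]
  ext j
  exact (congr_fun₂ hSU j i).trans ((mul_diagonal _ _ _ _).trans (mul_comm _ _))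

theorem toEuclideanLin_add_smul_vecMulVec [DecidableEq ι] (S : Matrix ι ι ℝ) (ρ : ℝ) (δ : ι → ℝ) :
    (S + ρ • vecMulVec δ δ).toEuclideanLin =
      rankOneUpdate S.toEuclideanLin ρ (WithLp.toLp 2 δ) := by
  ext x i
  simp only [map_add, map_smul, LinearMap.add_apply, LinearMap.smul_apply, PiLp.add_apply,
    ofLp_toLpLin, toLin'_apply, PiLp.smul_apply, vecMulVec_mulVec, Pi.smul_apply,
    MulOpposite.smul_eq_mul_unop, MulOpposite.unop_op, smul_eq_mul, rankOneUpdate_apply,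
    EuclideanSpace.inner_eq_star_dotProduct, star_trivial, dotProduct_comm, add_right_inj]
  ring

theorem exists_eigenbasis_toEuclideanLin [DecidableEq ι]
    (hv : ∀ i j, v i ⬝ᵥ v j = if i = j then 1 else 0) (hS : ∀ j, S *ᵥ v j = η j • v j) :
    ∃ b : OrthonormalBasis ι ℝ (EuclideanSpace ℝ ι), (∀ j, b j = WithLp.toLp 2 (v j)) ∧
      ∀ j, S.toEuclideanLin (b j) = η j • b j := by
  obtain ⟨b, hb⟩ := exists_orthonormalBasis_of_dotProduct hv
  exact ⟨b, hb, fun j => by simp [hb, hS]⟩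

theorem mulVec_inv_mulVec_of_injective [DecidableEq ι]
    (hS : Function.Injective S.toEuclideanLin) (x : ι → ℝ) : S *ᵥ (S⁻¹ *ᵥ x) = x := by
  have hS' : IsUnit S := mulVec_injective_iff_isUnit.1 fun y z h =>
    WithLp.toLp_injective 2 (hS (by simp [h]))
  rw [mulVec_mulVec, mul_nonsing_inv _ ((isUnit_iff_isUnit_det _).1 hS'), one_mulVec]

theorem toLp_mem_spanOn (hb : ∀ i, b i = WithLp.toLp 2 (v i)) {κ : Type*} {f : κ → ι}
    (hf : ∀ k, f k ∈ s) (hx : x ∈ Submodule.span ℝ (Set.range fun k => v (f k))) :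
    WithLp.toLp 2 x ∈ spanOn b s := by
  have := Submodule.mem_map_of_mem (f := (WithLp.linearEquiv 2 ℝ (ι → ℝ)).symm.toLinearMap) hx
  rw [Submodule.map_span] at this
  refine Submodule.span_mono ?_ this
  rintro _ ⟨_, ⟨k, rfl⟩, rfl⟩
  exact ⟨f k, hf k, hb _⟩

theorem effectiveGap_spanOn_toLp [DecidableEq ι] (hb : ∀ i, b i = WithLp.toLp 2 (v i))
    (s : Finset ι) (d ρ : ℝ) (δ : ι → ℝ) :
    effectiveGap (spanOn b s) d ρ (WithLp.toLp 2 δ) =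
      d * ρ * (∑ i, (∑ j ∈ sᶜ, (v j ⬝ᵥ δ) • v j) i ^ 2) / (d + ρ * ∑ i, δ i ^ 2) := by
  have hproj : (spanOn b s)ᗮ.starProjection (WithLp.toLp 2 δ) =
      WithLp.toLp 2 (∑ j ∈ sᶜ, (v j ⬝ᵥ δ) • v j) := by
    rw [starProjection_orthogonal_spanOn, starProjection_spanOn b.orthonormal, WithLp.toLp_sum]
    refine sum_congr rfl fun j _ => ?_
    rw [hb, EuclideanSpace.inner_toLp_toLp, star_trivial, dotProduct_comm, WithLp.toLp_smul]
  rw [effectiveGap, hproj, EuclideanSpace.real_norm_sq_eq, EuclideanSpace.real_norm_sq_eq]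

theorem sum_abs_transpose_mulVec_div_le (hU : ∀ i, b i = WithLp.toLp 2 (U.col i)) (hx : x ≠ 0)
    (h : ∑ i, |⟪b i, WithLp.toLp 2 x⟫_ℝ| ≤ c * ‖WithLp.toLp 2 x‖) :
    (∑ i, |(Uᵀ *ᵥ x) i|) / √(∑ i, (Uᵀ *ᵥ x) i ^ 2) ≤ c := by
  have coord (i : ι) : (Uᵀ *ᵥ x) i = ⟪b i, WithLp.toLp 2 x⟫_ℝ := by
    rw [hU, EuclideanSpace.inner_toLp_toLp, star_trivial, dotProduct_comm]
    rfl
  simp_rw [coord]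
  rw [b.sum_sq_inner_right, Real.sqrt_sq (norm_nonneg _), div_le_iff₀ (by simpa using hx)]
  exact h

end EuclideanCoordinates

theorem div_add_sqrt_div_le_mul {m ε g : ℝ} (hm : 0 < m) (hε : 0 ≤ ε) (hg : 0 < g - 2 * ε) :
    ε / m + √(ε / g) ≤ (m + ε) / m * (ε / m + √(ε / (g - 2 * ε))) := by
  have hfactor : 1 ≤ (m + ε) / m := (one_le_div hm).2 (by linarith)
  calc ε / m + √(ε / g) ≤ ε / m + √(ε / (g - 2 * ε)) := by
        gcongr
        linarith
    _ ≤ (m + ε) / m * (ε / m + √(ε / (g - 2 * ε))) :=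
        le_mul_of_one_le_left (by positivity) hfactor

theorem rotation_l1_l2_ratio_corollary_general
    {p : ℕ} (S : Matrix (Fin p) (Fin p) ℝ) (lam : Fin p → ℝ) (xi : Fin p → (Fin p → ℝ))
    (hpos : ∀ j, 0 < lam j) (hdesc : Antitone lam)
    (horth : ∀ i j : Fin p, xi i ⬝ᵥ xi j = if i = j then (1 : ℝ) else 0)
    (heig : ∀ j, S *ᵥ xi j = lam j • xi j)
    (δ : Fin p → ℝ) (hδ : δ ≠ 0) (ρ : ℝ) (hρ : 0 < ρ)
    (U : Matrix (Fin p) (Fin p) ℝ) (hU : Uᵀ * U = 1)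
    (η : Fin p → ℝ) (hηdesc : Antitone η)
    (hdiag : Uᵀ * (S + ρ • vecMulVec δ δ) * U = diagonal η)
    (K : ℕ) (hK1 : 1 ≤ K) (hKp : K ≤ p)
    (hmemK : δ ∈ Submodule.span ℝ
      (Set.range fun i : Fin K => xi ⟨i.1, lt_of_lt_of_le i.isLt hKp⟩)) :
    (∑ i, |(Uᵀ *ᵥ (S⁻¹ *ᵥ δ)) i|) / √(∑ i, (Uᵀ *ᵥ (S⁻¹ *ᵥ δ)) i ^ 2) ≤ √K ∧
    ∀ k : ℕ, 1 ≤ k → (hkp : k < p) →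
      ∀ δ2k : Fin p → ℝ, δ2k = (∑ i with k ≤ (i : Fin p).val, (xi i ⬝ᵥ δ) • xi i) →
      ∀ dk εk dtk : ℝ,
        dk = lam ⟨k - 1, (k.sub_le 1).trans_lt hkp⟩ - lam ⟨k, hkp⟩ →
        εk = lam ⟨k, hkp⟩ - lam ⟨p - 1, Nat.sub_one_lt_of_lt hkp⟩ →
        dtk = dk * ρ * (∑ i, δ2k i ^ 2) / (dk + ρ * ∑ i, δ i ^ 2) →
        0 < dtk →
        (∑ i, |(Uᵀ *ᵥ (S⁻¹ *ᵥ δ)) i|) / √(∑ i, (Uᵀ *ᵥ (S⁻¹ *ᵥ δ)) i ^ 2) ≤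
          √(k + 1) + √(p - k - 1 : ℕ) *
            (εk / lam ⟨p - 1, Nat.sub_one_lt_of_lt hkp⟩ + √(εk / dtk)) := by
  obtain ⟨b, hb, hT⟩ := exists_eigenbasis_toEuclideanLin horth heig
  obtain ⟨u, hu, hA⟩ := exists_eigenbasis_toEuclideanLin
    (fun i j => (congr_fun₂ hU i j).trans (one_apply ..))
    (mulVec_col_of_transpose_mul_mul_eq_diagonal hU hdiag)
  rw [toEuclideanLin_add_smul_vecMulVec] at hA
  have hSβ := mulVec_inv_mulVec_of_injective
    (injective_of_eigenbasis hT fun j => (hpos j).ne') δ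
  have hβ : S.toEuclideanLin (WithLp.toLp 2 (S⁻¹ *ᵥ δ)) = WithLp.toLp 2 δ := by simp [hSβ]
  have hβ0 : S⁻¹ *ᵥ δ ≠ 0 := fun h => hδ (by simpa [h] using hSβ.symm)
  constructor
  · exact sum_abs_transpose_mulVec_div_le hu hβ0
      (sum_abs_inner_le_sqrt_mul_norm_of_antitone hT (fun j => (hpos j).ne') hdesc hA hηdesc
        hρ hβ hK1 hKp (toLp_mem_spanOn hb (fun i => by simp) hmemK))
  · rintro k - hkp _ rfl dk εk _ hdk hεk rfl hgap
    have gap_eq := effectiveGap_spanOn_toLp hb {j | j.val < k} dk ρ δ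
    simp only [compl_filter, not_lt] at gap_eq
    rw [← gap_eq] at hgap ⊢
    exact sum_abs_transpose_mulVec_div_le hu hβ0
      (sum_abs_inner_le_of_effectiveGap_pos_of_antitone hT hpos hdesc hA hηdesc hρ.le hβ hkp
        hdk hεk hgap)

/-- Corollary 2: if `K` is the least positive integer with `δ ∈ W₁^K`, then
`‖Uᵀβ‖₁/‖Uᵀβ‖₂ ≤ min{C, √K}` where `C = min_{1 ≤ k < K} C_k` and `C_k = ∞`
unless `d̃_k − 2ε_k > 0`.  This is expressed as: the ratio is at most `√K`, and
for every `1 ≤ k < K` with `d̃_k − 2ε_k > 0` the ratio is at most `C_k`. -/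
theorem rotation_l1_l2_ratio_corollary
    {p : ℕ} (hp : 2 ≤ p)
    (S : Matrix (Fin p) (Fin p) ℝ) (hS : S.IsSymm)
    (lam : Fin p → ℝ) (xi : Fin p → (Fin p → ℝ))
    (hpos : ∀ j, 0 < lam j)
    (hdesc : ∀ i j : Fin p, i ≤ j → lam j ≤ lam i)
    (horth : ∀ i j : Fin p, xi i ⬝ᵥ xi j = if i = j then (1 : ℝ) else 0)
    (heig : ∀ j, S.mulVec (xi j) = lam j • xi j)
    (δ : Fin p → ℝ) (hδ : δ ≠ 0) (ρ : ℝ) (hρ : 0 < ρ)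
    (U : Matrix (Fin p) (Fin p) ℝ) (hU : Uᵀ * U = 1)
    (η : Fin p → ℝ) (hηdesc : ∀ i j : Fin p, i ≤ j → η j ≤ η i)
    (hdiag : Uᵀ * (S + ρ • vecMulVec δ δ) * U = Matrix.diagonal η)
    -- K is the least positive integer with δ ∈ W₁^K
    (K : ℕ) (hK1 : 1 ≤ K) (hKp : K ≤ p)
    (hmemK : δ ∈ Submodule.span ℝ
      (Set.range fun i : Fin K => xi ⟨i.1, lt_of_lt_of_le i.isLt hKp⟩))
    (hleast : ∀ m : ℕ, 1 ≤ m → (hm : m < K) →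
      δ ∉ Submodule.span ℝ (Set.range fun i : Fin m => xi ⟨i.1, by omega⟩))
    -- λ_K > λ_{K+1} whenever K < p
    (hgapK : ∀ h : K < p, lam ⟨K, h⟩ < lam ⟨K - 1, by omega⟩) :
    (∑ i, |(Uᵀ).mulVec (S⁻¹.mulVec δ) i|) /
        Real.sqrt (∑ i, ((Uᵀ).mulVec (S⁻¹.mulVec δ) i) ^ 2) ≤
      Real.sqrt K ∧
    ∀ k : ℕ, 1 ≤ k → (hkK : k < K) →
      ∀ δ2k : Fin p → ℝ,
        δ2k = (∑ i ∈ Finset.univ.filter fun i : Fin p => k ≤ (i : ℕ),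
          (xi i ⬝ᵥ δ) • xi i) →
      ∀ dk εk dtk : ℝ,
        dk = lam ⟨k - 1, by omega⟩ - lam ⟨k, by omega⟩ →
        εk = lam ⟨k, by omega⟩ - lam ⟨p - 1, by omega⟩ →
        dtk = dk * ρ * (∑ i, δ2k i ^ 2) / (dk + ρ * ∑ i, δ i ^ 2) →
        0 < dtk - 2 * εk →
        (∑ i, |(Uᵀ).mulVec (S⁻¹.mulVec δ) i|) /
            Real.sqrt (∑ i, ((Uᵀ).mulVec (S⁻¹.mulVec δ) i) ^ 2) ≤
          Real.sqrt (k + 1) +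
            Real.sqrt ((p - k - 1 : ℕ)) *
              ((lam ⟨p - 1, by omega⟩ + εk) / lam ⟨p - 1, by omega⟩) *
              (εk / lam ⟨p - 1, by omega⟩ + Real.sqrt (εk / (dtk - 2 * εk))) := by
  obtain ⟨sqrt_bound, headTail_bound⟩ := rotation_l1_l2_ratio_corollary_general S lam xi hpos
    hdesc horth heig δ hδ ρ hρ U hU η hηdesc hdiag K hK1 hKp hmemK
  refine ⟨sqrt_bound, fun k hk1 hkK δ2k hδ2k dk εk dtk hdk hεk hdtk hgap => ?_⟩
  have hε : 0 ≤ εk := hεk ▸ sub_nonneg.2 (hdesc _ _ (Nat.le_sub_one_of_lt (hkK.trans_le hKp)))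
  refine (headTail_bound k hk1 (by omega) δ2k hδ2k dk εk dtk hdk hεk hdtk (by linarith)).trans ?_
  rw [mul_assoc]
  gcongr
  exact div_add_sqrt_div_le_mul (hpos _) hε hgap
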